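/- arXiv:1710.09702 — 2 statements merged into one kernel-verified Lean document; each statement's English description precedes it below -/
import Mathlib

section
/- For any point P in the plane, any radius R > 0, and any A > 1, the sum of 1/⟨p⟩² over all lattice points p ∈ ℤ² lying on the circle of radius R centered at P and satisfying |p| ≥ A is bounded by C·A⁻¹ for an absolute constant C, where ⟨p⟩ = (1+|p|²)^{1/2}. -/
open scoped BigOperators

theorem term_bound (x y A : ℝ) (n : ℕ) (hA : 1 < A) (hn : (n : ℝ) = |x|)
    (h : A ^ 2 ≤ x ^ 2 + y ^ 2) :
    1 / (1 + x ^ 2 + y ^ 2) ≤ 8 * (1 / ((n : ℝ) + A) - 1 / (((n + 1 : ℕ) : ℝ) + A)) := by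
  have hx : x ^ 2 = (n : ℝ) ^ 2 := by rw [hn, sq_abs]
  have h0 : (0 : ℝ) ≤ n := Nat.cast_nonneg n
  rw [hx] at h ⊢
  have e : 8 * (1 / ((n : ℝ) + A) - 1 / (((n + 1 : ℕ) : ℝ) + A))
      = 8 / (((n : ℝ) + A) * ((n : ℝ) + 1 + A)) := by
    push_cast
    field_simp
    ring
  rw [e, div_le_div_iff₀ (by positivity) (by positivity)]
  nlinarith [sq_nonneg ((n : ℝ) - A), sq_nonneg y]

theorem fiber_card (P : ℝ × ℝ) (R A : ℝ)
    (s : Finset {p : ℤ × ℤ //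
            ((p.1 : ℝ) - P.1) ^ 2 + ((p.2 : ℝ) - P.2) ^ 2 = R ^ 2 ∧
            A ≤ Real.sqrt ((p.1 : ℝ) ^ 2 + (p.2 : ℝ) ^ 2)}) (n : ℕ) :
    (s.filter (fun p => p.1.1.natAbs = n)).card ≤ 4 := by
  classical
  have := Finset.card_le_card_of_injOn (s := s.filter (fun p => p.1.1.natAbs = n))
    (t := (Finset.univ : Finset (Bool × Bool)))
    (fun p => (decide (0 ≤ p.1.1), decide (P.2 ≤ (p.1.2 : ℝ)))) (by simp) ?_
  · simpa using this
  · rintro ⟨⟨x, y⟩, h1, h2⟩ hp ⟨⟨x', y'⟩, h1', h2'⟩ hp' he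
    simp only [Finset.coe_filter, Set.mem_setOf_eq] at hp hp'
    simp only [Prod.mk.injEq, decide_eq_decide] at he
    obtain ⟨e1, e2⟩ := he
    have hx : x = x' := by omega
    subst hx
    simp only at h1 h1'
    have hsq : ((y : ℝ) - P.2) ^ 2 = ((y' : ℝ) - P.2) ^ 2 := by linarith
    have hy : (y : ℝ) = y' := by
      rcases sq_eq_sq_iff_eq_or_eq_neg.mp hsq with h | h
      · linarith
      · by_cases hc : P.2 ≤ (y : ℝ)
        · have := e2.mp hc
          linarith
        · have := mt e2.mpr hc
          push Not at hc this
          linarith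
    have : y = y' := by exact_mod_cast hy
    subst this
    rfl

/-- For any point `P` in the plane, radius `R > 0` and `A > 1`, the sum of
`1/⟨p⟩² = 1/(1+|p|²)` over lattice points `p ∈ ℤ²` on the circle of radius
`R` centered at `P` with `|p| ≥ A` is at most `C · A⁻¹`. -/
theorem stmt_0 :
    ∃ C : ℝ, 0 < C ∧
      ∀ (P : ℝ × ℝ) (R A : ℝ), 0 < R → 1 < A →
        (∑' p : {p : ℤ × ℤ //
            ((p.1 : ℝ) - P.1) ^ 2 + ((p.2 : ℝ) - P.2) ^ 2 = R ^ 2 ∧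
            A ≤ Real.sqrt ((p.1 : ℝ) ^ 2 + (p.2 : ℝ) ^ 2)},
          1 / (1 + ((p : ℤ × ℤ).1 : ℝ) ^ 2 + ((p : ℤ × ℤ).2 : ℝ) ^ 2)) ≤ C * A⁻¹ := by
  classical
  refine ⟨32, by norm_num, fun P R A hR hA => ?_⟩
  have hA0 : 0 < A := by linarith
  refine Real.tsum_le_of_sum_le (fun p => by positivity) fun s => ?_
  set g : ℕ → ℝ := fun n => 1 / ((n : ℝ) + A) with hg
  have hg0 : ∀ n, 0 ≤ g n := fun n => by simp only [hg]; positivity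
  have hmono : ∀ n, 0 ≤ 8 * (g n - g (n + 1)) := by
    intro n
    have : g (n + 1) ≤ g n := by
      simp only [hg]
      apply one_div_le_one_div_of_le (by positivity)
      push_cast
      linarith
    linarith
  set N := s.sup (fun p => p.1.1.natAbs) + 1 with hN
  have hmaps : ∀ p ∈ s, p.1.1.natAbs ∈ Finset.range N := by
    intro p hp
    rw [Finset.mem_range, hN, Nat.lt_succ_iff]
    exact Finset.le_sup (f := fun p : {p : ℤ × ℤ // _} => p.1.1.natAbs) hp
  rw [← Finset.sum_fiberwise_of_maps_to hmaps]
  calc _ ≤ ∑ n ∈ Finset.range N, 4 * (8 * (g n - g (n + 1))) := by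
        refine Finset.sum_le_sum fun n _ => ?_
        refine (Finset.sum_le_card_nsmul _ _ (8 * (g n - g (n + 1))) ?_).trans ?_
        · rintro ⟨⟨x, y⟩, h1, h2⟩ hp
          have hx := (Finset.mem_filter.mp hp).2
          simp only at hx h2 ⊢
          refine term_bound x y A n hA ?_ ?_
          · rw [← hx, Nat.cast_natAbs, Int.cast_abs]
          · exact (Real.le_sqrt' hA0).mp h2
        · rw [nsmul_eq_mul]
          refine mul_le_mul_of_nonneg_right ?_ (hmono n)
          exact_mod_cast fiber_card P R A s n
    _ = 32 * (g 0 - g N) := by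
        rw [← Finset.sum_range_sub', Finset.mul_sum]
        refine Finset.sum_congr rfl fun n _ => ?_
        ring
    _ ≤ 32 * A⁻¹ := by
        have h1 : g 0 = A⁻¹ := by simp [hg]
        have := hg0 N
        rw [← h1]
        linarith
end

section
/- There is an absolute constant C such that for every j ∈ ℤ², the sum over all triples (p₁,p₂,p₃) ∈ (ℤ²)³ with p₁ − p₂ + p₃ = j and |p₁|² − |p₂|² + |p₃|² = |j|² of the quantity ⟨j⟩² · ⟨p₁⟩⁻² ⟨p₂⟩⁻² ⟨p₃⟩⁻² is at most C. -/
open scoped BigOperators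

/-- `|p|²` for `p ∈ ℤ²`. -/
def zsq (p : ℤ × ℤ) : ℤ := p.1 ^ 2 + p.2 ^ 2

/-- The square of the Japanese bracket `⟨p⟩² = 1 + |p|²`, as a real number. -/
def jb2 (p : ℤ × ℤ) : ℝ := 1 + (p.1 : ℝ) ^ 2 + (p.2 : ℝ) ^ 2

/-- The resonant set `R(j)` of triples `(p₁,p₂,p₃)` with `p₁ - p₂ + p₃ = j` and
`|p₁|² - |p₂|² + |p₃|² = |j|²`. -/
def Res (j : ℤ × ℤ) : Set ((ℤ × ℤ) × (ℤ × ℤ) × (ℤ × ℤ)) :=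
  {q | q.1 - q.2.1 + q.2.2 = j ∧ zsq q.1 - zsq q.2.1 + zsq q.2.2 = zsq j}

/-- One-dimensional weight. -/
noncomputable def wgt (n : ℤ) : ℝ := (1 + (n : ℝ) ^ 2) ^ (-(5 / 8) : ℝ)

lemma wgt_nonneg (n : ℤ) : 0 ≤ wgt n := by unfold wgt; positivity

lemma wgt_summable : Summable wgt := by
  have h := (Real.summable_abs_int_rpow (b := 5 / 4) (by norm_num))
  refine Summable.of_norm_bounded_eventually (g := fun n : ℤ => |(n : ℝ)| ^ (-(5 / 4) : ℝ)) h ?_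
  have : ∀ᶠ n : ℤ in Filter.cofinite, n ≠ 0 := by
    exact (Set.finite_singleton (0 : ℤ)).compl_mem_cofinite
  filter_upwards [this] with n hn
  rw [Real.norm_of_nonneg (wgt_nonneg n)]
  have hpos : 0 < |(n : ℝ)| := by positivity
  have e : |(n : ℝ)| ^ (-(5 / 4) : ℝ) = ((n : ℝ) ^ 2) ^ (-(5 / 8) : ℝ) := by
    rw [← sq_abs, ← Real.rpow_natCast, ← Real.rpow_mul hpos.le]
    norm_num
  rw [e]
  unfold wgt
  apply Real.rpow_le_rpow_of_nonpos (by positivity) (by linarith) (by norm_num)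

/-- Three-dimensional weight. -/
noncomputable def wgt3 (c : (ℤ × ℤ) × ℤ) : ℝ := wgt c.1.1 * wgt c.1.2 * wgt c.2

lemma wgt3_nonneg (c) : 0 ≤ wgt3 c :=
  mul_nonneg (mul_nonneg (wgt_nonneg _) (wgt_nonneg _)) (wgt_nonneg _)

lemma wgt3_summable : Summable wgt3 := by
  have h2 : Summable (fun x : ℤ × ℤ => wgt x.1 * wgt x.2) :=
    wgt_summable.mul_of_nonneg wgt_summable wgt_nonneg wgt_nonneg
  exact h2.mul_of_nonneg wgt_summable
    (fun x => mul_nonneg (wgt_nonneg _) (wgt_nonneg _)) wgt_nonneg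

lemma jb2_ge_one (p : ℤ × ℤ) : 1 ≤ jb2 p := by
  unfold jb2; nlinarith [sq_nonneg (p.1 : ℝ), sq_nonneg (p.2 : ℝ)]

lemma bnd (p p' : ℤ × ℤ) (n : ℤ) (h : jb2 p ≤ jb2 p') (hn : 1 + (n : ℝ) ^ 2 ≤ jb2 p') :
    1 / (jb2 p * jb2 p') ≤ wgt3 (p, n) := by
  have h1 := jb2_ge_one p
  have h2 := jb2_ge_one p'
  have a0 : 0 < jb2 p := by linarith
  have b0 : 0 < jb2 p' := by linarith
  have e : 1 / (jb2 p * jb2 p') =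
      jb2 p ^ (-1 : ℝ) * jb2 p' ^ (-(3 / 8) : ℝ) * jb2 p' ^ (-(5 / 8) : ℝ) := by
    rw [mul_assoc, ← Real.rpow_add b0]
    norm_num [Real.rpow_neg_one]
    ring
  have s1 : jb2 p' ^ (-(3 / 8) : ℝ) ≤ jb2 p ^ (-(1 / 4) : ℝ) :=
    (Real.rpow_le_rpow_of_nonpos a0 h (by norm_num)).trans
      (Real.rpow_le_rpow_of_exponent_le h1 (by norm_num))
  have s2 : jb2 p' ^ (-(5 / 8) : ℝ) ≤ wgt n :=
    Real.rpow_le_rpow_of_nonpos (by positivity) hn (by norm_num)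
  have s3 : jb2 p ^ (-1 : ℝ) * jb2 p ^ (-(1 / 4) : ℝ) ≤ wgt p.1 * wgt p.2 := by
    unfold wgt
    rw [← Real.rpow_add a0, ← Real.mul_rpow (by positivity) (by positivity)]
    have : jb2 p ^ ((-1 : ℝ) + -(1 / 4)) = (jb2 p ^ 2) ^ (-(5 / 8) : ℝ) := by
      rw [← Real.rpow_natCast, ← Real.rpow_mul a0.le]; norm_num
    rw [this]
    apply Real.rpow_le_rpow_of_nonpos (by positivity) _ (by norm_num)
    unfold jb2
    nlinarith [sq_nonneg (p.1 : ℝ), sq_nonneg (p.2 : ℝ), sq_nonneg ((p.1 : ℝ) ^ 2),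
      sq_nonneg ((p.2 : ℝ) ^ 2), mul_nonneg (sq_nonneg (p.1 : ℝ)) (sq_nonneg (p.2 : ℝ))]
  rw [e]
  unfold wgt3
  have := wgt_nonneg n
  calc _ ≤ jb2 p ^ (-1 : ℝ) * jb2 p ^ (-(1 / 4) : ℝ) * wgt n := by gcongr
    _ ≤ _ := by gcongr

lemma tsum_bound {ι κ K : Type} [Fintype K] (t : ι → ℝ) (H : κ → ℝ) (ht : ∀ q, 0 ≤ t q)
    (hH : Summable H) (hH0 : ∀ c, 0 ≤ H c) (R : K → ι → κ → Prop)
    (h1 : ∀ q, ∃ k c, R k q c ∧ t q ≤ H c)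
    (h2 : ∀ k q q' c, R k q c → R k q' c → q = q') :
    ∑' q, t q ≤ Fintype.card K * ∑' c, H c := by
  choose k c hR hle using h1
  have hinj : Function.Injective (fun q => (k q, c q)) := by
    intro q q' h
    simp only [Prod.mk.injEq] at h
    apply h2 (k q) q q' (c q) (hR q)
    rw [h.1, h.2]; exact hR q'
  have hs : Summable (fun x : K × κ => H x.2) := by
    have := (Summable.of_finite (f := fun _ : K => (1 : ℝ))).mul_of_nonneg hH
      (fun _ => zero_le_one) hH0
    simpa using this
  have hs' : Summable (fun q => H (c q)) := hs.comp_injective hinj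
  have hst : Summable t := Summable.of_nonneg_of_le ht hle hs'
  calc ∑' q, t q ≤ ∑' q, H (c q) := hst.tsum_le_tsum hle hs'
    _ ≤ ∑' x : K × κ, H x.2 :=
        tsum_comp_le_tsum_of_inj hs (fun x => hH0 _) hinj
    _ = Fintype.card K * ∑' c, H c := by
        rw [hs.tsum_prod]
        simp [tsum_fintype]

/-- Encoding relation. -/
def Enc (j : ℤ × ℤ) (k : Fin 5) (p w : ℤ × ℤ) (c : (ℤ × ℤ) × ℤ) : Prop :=
  match k with
  | 0 => c = (w, p.1) ∧ j.2 + w.2 ≤ 2 * p.2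
  | 1 => c = (w, p.1) ∧ 2 * p.2 < j.2 + w.2
  | 2 => c = (p, w.1) ∧ p.2 ≠ j.2
  | 3 => c = (p, w.2) ∧ p.1 ≠ j.1
  | 4 => c = (w, w.1) ∧ p = j

/-- Orthogonality. -/
def Orth (j p w : ℤ × ℤ) : Prop :=
  (p.1 - j.1) * (w.1 - p.1) + (p.2 - j.2) * (w.2 - p.2) = 0

lemma enc_inj (j : ℤ × ℤ) (k : Fin 5) (p w p' w' : ℤ × ℤ) (c : (ℤ × ℤ) × ℤ)
    (h : Enc j k p w c) (h' : Enc j k p' w' c) (o : Orth j p w) (o' : Orth j p' w') :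
    p = p' ∧ w = w' := by
  obtain ⟨x, y⟩ := p
  obtain ⟨x', y'⟩ := p'
  obtain ⟨u, v⟩ := w
  obtain ⟨u', v'⟩ := w'
  unfold Orth at o o'
  fin_cases k <;> simp only [Enc, Fin.zero_eta, Fin.mk_one, Fin.reduceFinMk] at h h' <;>
    obtain ⟨rfl, h⟩ := h <;> obtain ⟨e, h'⟩ := h' <;> simp only [Prod.mk.injEq] at e ⊢ <;>
    simp only at h h' o o'
  · obtain ⟨⟨rfl, rfl⟩, rfl⟩ := e
    have : (y - y') * (j.2 + v - y - y') = 0 := by linear_combination o - o'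
    rcases mul_eq_zero.1 this with h0 | h0 <;> omega
  · obtain ⟨⟨rfl, rfl⟩, rfl⟩ := e
    have : (y - y') * (j.2 + v - y - y') = 0 := by linear_combination o - o'
    rcases mul_eq_zero.1 this with h0 | h0 <;> omega
  · obtain ⟨⟨rfl, rfl⟩, rfl⟩ := e
    have : (y - j.2) * (v - v') = 0 := by linear_combination o - o'
    rcases mul_eq_zero.1 this with h0 | h0 <;> omega
  · obtain ⟨⟨rfl, rfl⟩, rfl⟩ := e
    have : (x - j.1) * (u - u') = 0 := by linear_combination o - o'
    rcases mul_eq_zero.1 this with h0 | h0 <;> omega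
  · obtain ⟨⟨rfl, rfl⟩, -⟩ := e
    rw [← h'] at h
    simp only [Prod.mk.injEq] at h
    simp [h]

lemma enc_exists (j p w r : ℤ × ℤ) (hr : p - w + r = j) (hJ : jb2 j + jb2 w = jb2 p + jb2 r)
    (hpr : jb2 p ≤ jb2 r) :
    ∃ k c, Enc j k p w c ∧ jb2 j / (jb2 p * jb2 w * jb2 r) ≤ 2 * wgt3 c := by
  have a := jb2_ge_one p
  have b := jb2_ge_one w
  have d := jb2_ge_one r
  have g := jb2_ge_one j
  have key : jb2 j / (jb2 p * jb2 w * jb2 r) ≤ 2 * (1 / (jb2 w * jb2 p)) := by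
    rw [mul_one_div, div_le_div_iff₀ (by positivity) (by positivity)]
    have : 0 ≤ jb2 w * jb2 p := by positivity
    nlinarith
  have c1 (q : ℤ × ℤ) : 1 + (q.1 : ℝ) ^ 2 ≤ jb2 q := by
    unfold jb2; nlinarith [sq_nonneg (q.2 : ℝ)]
  have c2 (q : ℤ × ℤ) : 1 + (q.2 : ℝ) ^ 2 ≤ jb2 q := by
    unfold jb2; nlinarith [sq_nonneg (q.1 : ℝ)]
  rcases le_total (jb2 w) (jb2 p) with h | h
  · have := bnd w p p.1 h (c1 p)
    rcases le_or_gt (j.2 + w.2) (2 * p.2) with h' | h'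
    · exact ⟨0, _, ⟨rfl, h'⟩, by linarith⟩
    · exact ⟨1, _, ⟨rfl, h'⟩, by linarith⟩
  · rw [mul_comm (jb2 w)] at key
    by_cases h2 : p.2 = j.2
    · by_cases h1 : p.1 = j.1
      · have hp : p = j := Prod.ext h1 h2
        refine ⟨4, _, ⟨rfl, hp⟩, ?_⟩
        have hw : r = w := by
          rw [hp] at hr
          have : r = w + (j - w + r) - j := by abel
          rw [this, hr]; abel
        have := bnd w w w.1 le_rfl (c1 w)
        have h3 := wgt3_nonneg (w, w.1)
        rw [hw, hp, mul_assoc, ← div_div, div_self (by positivity)]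
        linarith
      · have := bnd p w w.2 h (c2 w)
        exact ⟨3, _, ⟨rfl, h1⟩, by linarith⟩
    · have := bnd p w w.1 h (c1 w)
      exact ⟨2, _, ⟨rfl, h2⟩, by linarith⟩

lemma res_facts (j p w r : ℤ × ℤ) (h : (p, w, r) ∈ Res j) :
    p - w + r = j ∧ jb2 j + jb2 w = jb2 p + jb2 r ∧ Orth j p w ∧ Orth j r w := by
  obtain ⟨h1, h2⟩ := h
  simp only at h1 h2
  refine ⟨h1, ?_, ?_⟩
  · unfold zsq at h2
    have : ((p.1 ^ 2 + p.2 ^ 2 - (w.1 ^ 2 + w.2 ^ 2) + (r.1 ^ 2 + r.2 ^ 2) : ℤ) : ℝ)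
      = ((j.1 ^ 2 + j.2 ^ 2 : ℤ) : ℝ) := by rw [h2]
    push_cast at this
    unfold jb2
    linarith
  · subst h1
    unfold zsq at h2
    unfold Orth
    simp only [Prod.fst_add, Prod.snd_add, Prod.fst_sub, Prod.snd_sub] at *
    constructor
    · apply mul_left_cancel₀ (two_ne_zero (α := ℤ)); linear_combination -h2
    · apply mul_left_cancel₀ (two_ne_zero (α := ℤ)); linear_combination -h2

/-- There is an absolute constant `C` such that for every `j ∈ ℤ²`,
`∑_{(p₁,p₂,p₃) ∈ R(j)} ⟨j⟩² ⟨p₁⟩⁻² ⟨p₂⟩⁻² ⟨p₃⟩⁻² ≤ C`. -/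
theorem stmt_1 :
    ∃ C : ℝ, 0 < C ∧ ∀ j : ℤ × ℤ,
      (∑' q : Res j, jb2 j / (jb2 (q : (ℤ × ℤ) × (ℤ × ℤ) × (ℤ × ℤ)).1 *
        jb2 (q : (ℤ × ℤ) × (ℤ × ℤ) × (ℤ × ℤ)).2.1 *
        jb2 (q : (ℤ × ℤ) × (ℤ × ℤ) × (ℤ × ℤ)).2.2)) ≤ C := by
  have hpos : 0 ≤ ∑' c, 2 * wgt3 c :=
    tsum_nonneg fun c => mul_nonneg zero_le_two (wgt3_nonneg c)
  refine ⟨Fintype.card (Bool × Fin 5) * ∑' c, 2 * wgt3 c + 1, by positivity, fun j => ?_⟩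
  refine le_trans (tsum_bound (K := Bool × Fin 5) _ (fun c => 2 * wgt3 c) ?_
    (wgt3_summable.mul_left 2) (fun c => mul_nonneg zero_le_two (wgt3_nonneg c))
    (fun k q c => Enc j k.2 (if k.1 then q.1.1 else q.1.2.2) q.1.2.1 c) ?_ ?_)
    (le_add_of_nonneg_right zero_le_one)
  · intro q
    have h0 (p) : 0 ≤ jb2 p := zero_le_one.trans (jb2_ge_one p)
    exact div_nonneg (h0 _) (mul_nonneg (mul_nonneg (h0 _) (h0 _)) (h0 _))
  · rintro ⟨⟨p, w, r⟩, hq⟩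
    obtain ⟨f1, f2, -, -⟩ := res_facts j p w r hq
    rcases le_total (jb2 p) (jb2 r) with h | h
    · obtain ⟨k, c, e1, e2⟩ := enc_exists j p w r f1 f2 h
      exact ⟨(true, k), c, by simpa using e1, e2⟩
    · obtain ⟨k, c, e1, e2⟩ := enc_exists j r w p (by rw [← f1]; abel) (by linarith) h
      refine ⟨(false, k), c, by simpa using e1, ?_⟩
      have : jb2 p * jb2 w * jb2 r = jb2 r * jb2 w * jb2 p := by ring
      simp only [this]
      exact e2
  · rintro ⟨b, k⟩ ⟨⟨p, w, r⟩, hq⟩ ⟨⟨p', w', r'⟩, hq'⟩ c e e'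
    obtain ⟨f1, -, f3, f4⟩ := res_facts j p w r hq
    obtain ⟨f1', -, f3', f4'⟩ := res_facts j p' w' r' hq'
    cases b
    · obtain ⟨rfl, rfl⟩ := enc_inj j k r w r' w' c (by simpa using e) (by simpa using e') f4 f4'
      have : p = p' := by
        have := f1.trans f1'.symm
        simpa using this
      subst this; rfl
    · obtain ⟨rfl, rfl⟩ := enc_inj j k p w p' w' c (by simpa using e) (by simpa using e') f3 f3'
      have : r = r' := by
        have := f1.trans f1'.symm
        simpa using this
      subst this; rfl
end
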